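/- Let γ ∈ [0, π/2) and A > 0, C > 0. If F′(π) = −4·C·sin(γ/2) + 2·cos γ ≥ 0, then the dimensionless total force F has at most one zero on [0, π]; if F′(π) < 0, then F has at most two zeros on [0, π]. -/

import Mathlib

/-!
For `0 ≤ γ ≤ π / 2` and `0 ≤ C`, every term of `F''` is nonnegative on `[0, π / 2]` and nonpositive
on `[π - γ, π]`, while every term of `F'` is nonnegative on `[π / 2, π - γ]`. Hence `F` is convex on
`[0, π / 2]`, and there is a turning point `p ∈ [π - γ, π]` such that `F` strictly increases on
`[π / 2, p]` and strictly decreases on `[p, π]`; if `0 ≤ F' π` one can take `p = π`. A convex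
function strictly increases at every level above its initial value, so `F 0 < 0` leaves room for
at most one zero on `[0, p]`, and strict decrease allows at most one more on `[p, π]`.
-/

open Real Set

section CountingSolutions

variable {𝕜 β : Type*} [Field 𝕜] [LinearOrder 𝕜] [IsStrictOrderedRing 𝕜]
  [AddCommMonoid β] [LinearOrder β] [IsOrderedCancelAddMonoid β] [Module 𝕜 β]
  [PosSMulStrictMono 𝕜 β] {f : 𝕜 → β} {a m p b : 𝕜} {c : β}

theorem strictMonoOn_setOf_lt_of_convexOn_of_strictMonoOn (hconv : ConvexOn 𝕜 (Icc a m) f)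
    (hmono : StrictMonoOn f (Icc m p)) : StrictMonoOn f {x ∈ Icc a p | f a < f x} := by
  rintro x ⟨⟨hax, -⟩, hfx⟩ y ⟨⟨-, hyp⟩, -⟩ hxy
  have hax' : a < x := hax.lt_of_ne fun h => hfx.ne (congrArg f h)
  have lt_of_le_m {z : 𝕜} (hxz : x < z) (hzm : z ≤ m) : f x < f z :=
    hconv.lt_right_of_left_lt ⟨le_rfl, hax.trans (hxz.le.trans hzm)⟩ ⟨hax.trans hxz.le, hzm⟩
      (openSegment_eq_Ioo (hax'.trans hxz) ▸ ⟨hax', hxz⟩) hfx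
  rcases le_or_gt y m with hym | hmy
  · exact lt_of_le_m hxy hym
  have hfm : StrictMonoOn f (Icc m y) := hmono.mono (Icc_subset_Icc_right hyp)
  rcases le_or_gt m x with hmx | hxm
  · exact hfm ⟨hmx, hxy.le⟩ ⟨hmy.le, le_rfl⟩ hxy
  · exact (lt_of_le_m hxm le_rfl).trans (hfm ⟨le_rfl, hmy.le⟩ ⟨hmy.le, le_rfl⟩ hmy)

theorem encard_setOf_eq_le_one_of_convexOn_of_strictMonoOn (ha : f a < c)
    (hconv : ConvexOn 𝕜 (Icc a m) f) (hmono : StrictMonoOn f (Icc m p)) :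
    {x ∈ Icc a p | f x = c}.encard ≤ 1 := by
  rw [encard_le_one_iff]
  rintro x y ⟨hx, hfx⟩ ⟨hy, hfy⟩
  exact (strictMonoOn_setOf_lt_of_convexOn_of_strictMonoOn hconv hmono).injOn
    ⟨hx, hfx ▸ ha⟩ ⟨hy, hfy ▸ ha⟩ (hfx.trans hfy.symm)

theorem encard_setOf_eq_le_two_of_convexOn_of_strictMonoOn_of_strictAntiOn (ha : f a < c)
    (hconv : ConvexOn 𝕜 (Icc a m) f) (hmono : StrictMonoOn f (Icc m p))
    (hanti : StrictAntiOn f (Icc p b)) : {x ∈ Icc a b | f x = c}.encard ≤ 2 := by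
  have hright : {x ∈ Icc p b | f x = c}.encard ≤ 1 := by
    rw [encard_le_one_iff]
    rintro x y ⟨hx, hfx⟩ ⟨hy, hfy⟩
    exact hanti.injOn hx hy (hfx.trans hfy.symm)
  have hcover : {x ∈ Icc a b | f x = c} ⊆ {x ∈ Icc a p | f x = c} ∪ {x ∈ Icc p b | f x = c} :=
    fun x ⟨hx, hfx⟩ => (Icc_subset_Icc_union_Icc hx).imp (⟨·, hfx⟩) (⟨·, hfx⟩)
  calc {x ∈ Icc a b | f x = c}.encard
      ≤ {x ∈ Icc a p | f x = c}.encard + {x ∈ Icc p b | f x = c}.encard :=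
        (encard_le_encard hcover).trans (encard_union_le _ _)
    _ ≤ 1 + 1 :=
        add_le_add (encard_setOf_eq_le_one_of_convexOn_of_strictMonoOn ha hconv hmono) hright
    _ = 2 := one_add_one_eq_two

end CountingSolutions

/-- The dimensionless total force `F` at the angle `φ`. -/
noncomputable def totalForce (γ A C φ : ℝ) : ℝ :=
  -A * C ^ 2 - 2 * sin (φ + γ) - 4 * C * cos ((φ + γ) / 2) * sin φ
    - (1 / 2) * C ^ 2 * sin (2 * φ) + C ^ 2 * φ

/-- The derivative `F'` of the total force, which does not depend on `A`. The terms coming from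
`-(1 / 2) * C ^ 2 * sin (2 * φ) + C ^ 2 * φ` are combined into a square, so that each term has a
definite sign on each of the intervals of interest. -/
noncomputable def totalForceDeriv (γ C φ : ℝ) : ℝ :=
  -2 * cos (φ + γ) + 2 * C * (sin ((φ + γ) / 2) * sin φ)
    - 4 * C * (cos ((φ + γ) / 2) * cos φ) + 2 * C ^ 2 * sin φ ^ 2

/-- The second derivative `F''` of the total force. -/
noncomputable def totalForceDerivTwo (γ C φ : ℝ) : ℝ :=
  2 * sin (φ + γ) + 5 * C * (cos ((φ + γ) / 2) * sin φ)
    + 4 * C * (sin ((φ + γ) / 2) * cos φ) + 4 * C ^ 2 * (sin φ * cos φ)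

section TotalForce

variable {γ A C φ p : ℝ}

theorem hasDerivAt_totalForce (γ A C φ : ℝ) :
    HasDerivAt (totalForce γ A C) (totalForceDeriv γ C φ) φ := by
  have hadd : HasDerivAt (fun x : ℝ => x + γ) 1 φ := (hasDerivAt_id φ).add_const γ
  have hdouble : HasDerivAt (fun x : ℝ => 2 * x) (2 * 1) φ := (hasDerivAt_id φ).const_mul 2
  have h := ((((hadd.sin.const_mul 2).const_sub (-A * C ^ 2)).sub
    (((hadd.div_const 2).cos.const_mul (4 * C)).mul (hasDerivAt_sin φ))).sub
    (hdouble.sin.const_mul ((1 / 2) * C ^ 2))).add ((hasDerivAt_id φ).const_mul (C ^ 2))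
  refine HasDerivAt.congr_deriv (f := totalForce γ A C) h ?_
  simp only [totalForceDeriv, cos_two_mul, sin_sq]
  ring

theorem hasDerivAt_totalForceDeriv (γ C φ : ℝ) :
    HasDerivAt (totalForceDeriv γ C) (totalForceDerivTwo γ C φ) φ := by
  have hadd : HasDerivAt (fun x : ℝ => x + γ) 1 φ := (hasDerivAt_id φ).add_const γ
  have hhalf : HasDerivAt (fun x : ℝ => (x + γ) / 2) (1 / 2) φ := hadd.div_const 2
  have h := (((hadd.cos.const_mul (-2)).add
    ((hhalf.sin.mul (hasDerivAt_sin φ)).const_mul (2 * C))).sub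
    ((hhalf.cos.mul (hasDerivAt_cos φ)).const_mul (4 * C))).add
    (((hasDerivAt_sin φ).pow 2).const_mul (2 * C ^ 2))
  refine HasDerivAt.congr_deriv (f := totalForceDeriv γ C) h ?_
  simp only [totalForceDerivTwo]
  ring

theorem continuous_totalForce (γ A C : ℝ) : Continuous (totalForce γ A C) :=
  continuous_iff_continuousAt.2 fun φ => (hasDerivAt_totalForce γ A C φ).continuousAt

theorem continuous_totalForceDeriv (γ C : ℝ) : Continuous (totalForceDeriv γ C) :=
  continuous_iff_continuousAt.2 fun φ => (hasDerivAt_totalForceDeriv γ C φ).continuousAt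

theorem totalForce_zero (γ A C : ℝ) : totalForce γ A C 0 = -A * C ^ 2 - 2 * sin γ := by
  simp [totalForce]

theorem totalForceDeriv_pi (γ C : ℝ) :
    totalForceDeriv γ C π = -4 * C * sin (γ / 2) + 2 * cos γ := by
  have h : cos ((π + γ) / 2) = -sin (γ / 2) := by
    rw [← cos_add_pi_div_two, add_div, add_comm]
  rw [totalForceDeriv, h, add_comm π γ, cos_add_pi, sin_pi, cos_pi]
  ring

theorem totalForceDerivTwo_nonneg (hγ : γ ∈ Icc 0 (π / 2)) (hC : 0 ≤ C)
    (hφ : φ ∈ Icc 0 (π / 2)) : 0 ≤ totalForceDerivTwo γ C φ := by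
  obtain ⟨hγ₀, hγ₁⟩ := hγ
  obtain ⟨hφ₀, hφ₁⟩ := hφ
  have hsin_add : 0 ≤ sin (φ + γ) := sin_nonneg_of_nonneg_of_le_pi (by linarith) (by linarith)
  have hsin_half : 0 ≤ sin ((φ + γ) / 2) :=
    sin_nonneg_of_nonneg_of_le_pi (by linarith) (by linarith)
  have hcos_half : 0 ≤ cos ((φ + γ) / 2) :=
    cos_nonneg_of_neg_pi_div_two_le_of_le (by linarith) (by linarith)
  have hsin : 0 ≤ sin φ := sin_nonneg_of_nonneg_of_le_pi hφ₀ (by linarith)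
  have hcos : 0 ≤ cos φ := cos_nonneg_of_neg_pi_div_two_le_of_le (by linarith) hφ₁
  rw [totalForceDerivTwo]
  positivity

theorem totalForceDerivTwo_neg (hγ : γ ≤ π / 2) (hC : 0 ≤ C) (hφ : φ ∈ Ioc (π - γ) π) :
    totalForceDerivTwo γ C φ < 0 := by
  obtain ⟨hφ₀, hφ₁⟩ := hφ
  have hsin_add : sin (φ + γ) < 0 := by
    rw [← neg_pos, ← sin_sub_pi]
    exact sin_pos_of_pos_of_lt_pi (by linarith) (by linarith)
  have hsin_half : 0 ≤ sin ((φ + γ) / 2) :=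
    sin_nonneg_of_nonneg_of_le_pi (by linarith) (by linarith)
  have hcos_half : cos ((φ + γ) / 2) ≤ 0 :=
    cos_nonpos_of_pi_div_two_le_of_le (by linarith) (by linarith)
  have hsin : 0 ≤ sin φ := sin_nonneg_of_nonneg_of_le_pi (by linarith) hφ₁
  have hcos : cos φ ≤ 0 := cos_nonpos_of_pi_div_two_le_of_le (by linarith) (by linarith)
  have h₁ : 5 * C * (cos ((φ + γ) / 2) * sin φ) ≤ 0 :=
    mul_nonpos_of_nonneg_of_nonpos (by positivity) (mul_nonpos_of_nonpos_of_nonneg hcos_half hsin)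
  have h₂ : 4 * C * (sin ((φ + γ) / 2) * cos φ) ≤ 0 :=
    mul_nonpos_of_nonneg_of_nonpos (by positivity) (mul_nonpos_of_nonneg_of_nonpos hsin_half hcos)
  have h₃ : 4 * C ^ 2 * (sin φ * cos φ) ≤ 0 :=
    mul_nonpos_of_nonneg_of_nonpos (by positivity) (mul_nonpos_of_nonneg_of_nonpos hsin hcos)
  rw [totalForceDerivTwo]
  linarith

theorem totalForceDeriv_pos (hγ : 0 ≤ γ) (hC : 0 ≤ C) (hφ : φ ∈ Icc (π / 2) (π - γ))
    (hφγ : π / 2 < φ + γ) : 0 < totalForceDeriv γ C φ := by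
  obtain ⟨hφ₀, hφ₁⟩ := hφ
  have hcos_add : cos (φ + γ) < 0 := cos_neg_of_pi_div_two_lt_of_lt hφγ (by linarith)
  have hsin_half : 0 ≤ sin ((φ + γ) / 2) :=
    sin_nonneg_of_nonneg_of_le_pi (by linarith) (by linarith)
  have hcos_half : 0 ≤ cos ((φ + γ) / 2) :=
    cos_nonneg_of_neg_pi_div_two_le_of_le (by linarith) (by linarith)
  have hsin : 0 ≤ sin φ := sin_nonneg_of_nonneg_of_le_pi (by linarith) (by linarith)
  have hcos : cos φ ≤ 0 := cos_nonpos_of_pi_div_two_le_of_le hφ₀ (by linarith)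
  have h₁ : 0 ≤ 2 * C * (sin ((φ + γ) / 2) * sin φ) := by positivity
  have h₂ : 4 * C * (cos ((φ + γ) / 2) * cos φ) ≤ 0 :=
    mul_nonpos_of_nonneg_of_nonpos (by positivity) (mul_nonpos_of_nonneg_of_nonpos hcos_half hcos)
  have h₃ : 0 ≤ 2 * C ^ 2 * sin φ ^ 2 := by positivity
  rw [totalForceDeriv]
  linarith

theorem convexOn_totalForce (A : ℝ) (hγ : γ ∈ Icc 0 (π / 2)) (hC : 0 ≤ C) :
    ConvexOn ℝ (Icc 0 (π / 2)) (totalForce γ A C) :=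
  convexOn_of_hasDerivWithinAt2_nonneg (convex_Icc _ _) (continuous_totalForce γ A C).continuousOn
    (fun φ _ => (hasDerivAt_totalForce γ A C φ).hasDerivWithinAt)
    (fun φ _ => (hasDerivAt_totalForceDeriv γ C φ).hasDerivWithinAt)
    fun _ hφ => totalForceDerivTwo_nonneg hγ hC (interior_subset hφ)

theorem strictAntiOn_totalForceDeriv (hγ : γ ≤ π / 2) (hC : 0 ≤ C) :
    StrictAntiOn (totalForceDeriv γ C) (Icc (π - γ) π) := by
  refine strictAntiOn_of_hasDerivWithinAt_neg (convex_Icc _ _)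
    (continuous_totalForceDeriv γ C).continuousOn
    (fun φ _ => (hasDerivAt_totalForceDeriv γ C φ).hasDerivWithinAt) fun φ hφ => ?_
  rw [interior_Icc] at hφ
  exact totalForceDerivTwo_neg hγ hC (Ioo_subset_Ioc_self hφ)

theorem strictMonoOn_totalForce (A : ℝ) (hγ : γ ∈ Icc 0 (π / 2)) (hC : 0 ≤ C)
    (hp : p ∈ Icc (π - γ) π) (h : 0 ≤ totalForceDeriv γ C p) :
    StrictMonoOn (totalForce γ A C) (Icc (π / 2) p) := by
  refine strictMonoOn_of_hasDerivWithinAt_pos (convex_Icc _ _)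
    (continuous_totalForce γ A C).continuousOn
    (fun φ _ => (hasDerivAt_totalForce γ A C φ).hasDerivWithinAt) fun φ hφ => ?_
  rw [interior_Icc] at hφ
  rcases le_total φ (π - γ) with hφγ | hφγ
  · exact totalForceDeriv_pos hγ.1 hC ⟨hφ.1.le, hφγ⟩ (by linarith [hφ.1, hγ.1])
  · exact h.trans_lt
      (strictAntiOn_totalForceDeriv hγ.2 hC ⟨hφγ, hφ.2.le.trans hp.2⟩ hp hφ.2)

theorem strictAntiOn_totalForce (A : ℝ) (hγ : γ ≤ π / 2) (hC : 0 ≤ C)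
    (hp : p ∈ Icc (π - γ) π) (h : totalForceDeriv γ C p ≤ 0) :
    StrictAntiOn (totalForce γ A C) (Icc p π) := by
  refine strictAntiOn_of_hasDerivWithinAt_neg (convex_Icc _ _)
    (continuous_totalForce γ A C).continuousOn
    (fun φ _ => (hasDerivAt_totalForce γ A C φ).hasDerivWithinAt) fun φ hφ => ?_
  rw [interior_Icc] at hφ
  exact (strictAntiOn_totalForceDeriv hγ hC hp ⟨hp.1.trans hφ.1.le, hφ.2.le⟩ hφ.1).trans_le h

theorem exists_totalForceDeriv_eq_zero (hγ : γ ∈ Icc 0 (π / 2)) (hC : 0 ≤ C)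
    (h : totalForceDeriv γ C π ≤ 0) : ∃ p ∈ Icc (π - γ) π, totalForceDeriv γ C p = 0 := by
  have hpos : 0 < totalForceDeriv γ C (π - γ) :=
    totalForceDeriv_pos hγ.1 hC ⟨by linarith [hγ.2], le_rfl⟩ (by linarith [pi_pos])
  exact intermediate_value_Icc' (sub_le_self π hγ.1)
    (continuous_totalForceDeriv γ C).continuousOn ⟨h, hpos.le⟩

theorem total_force_zero_count_acute_general (hγ : γ ∈ Icc 0 (π / 2)) (hC : 0 ≤ C)
    (h₀ : totalForce γ A C 0 < 0) :
    (0 ≤ totalForceDeriv γ C π → {φ ∈ Icc 0 π | totalForce γ A C φ = 0}.encard ≤ 1) ∧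
      {φ ∈ Icc 0 π | totalForce γ A C φ = 0}.encard ≤ 2 := by
  have hconv := convexOn_totalForce A hγ hC
  have encard_le_one (hπ : 0 ≤ totalForceDeriv γ C π) :=
    encard_setOf_eq_le_one_of_convexOn_of_strictMonoOn h₀ hconv
      (strictMonoOn_totalForce A hγ hC ⟨sub_le_self π hγ.1, le_rfl⟩ hπ)
  refine ⟨encard_le_one, ?_⟩
  rcases le_total 0 (totalForceDeriv γ C π) with hπ | hπ
  · exact (encard_le_one hπ).trans one_le_two
  · obtain ⟨p, hp, hp₀⟩ := exists_totalForceDeriv_eq_zero hγ hC hπ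
    exact encard_setOf_eq_le_two_of_convexOn_of_strictMonoOn_of_strictAntiOn h₀ hconv
      (strictMonoOn_totalForce A hγ hC hp hp₀.ge) (strictAntiOn_totalForce A hγ.2 hC hp hp₀.le)

theorem totalForce_zero_neg (hγ : γ ∈ Icc 0 π) (hA : 0 < A) (hC : 0 < C) :
    totalForce γ A C 0 < 0 := by
  have hsin : 0 ≤ sin γ := sin_nonneg_of_mem_Icc hγ
  have hAC : 0 < A * C ^ 2 := by positivity
  rw [totalForce_zero]
  linarith

end TotalForce

/-- For `γ ∈ [0, π/2)` and `A, C > 0`: if `F′(π) = −4·C·sin(γ/2) + 2·cos γ ≥ 0` then `F` has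
at most one zero on `[0, π]`; if `F′(π) < 0` then `F` has at most two zeros on `[0, π]`. -/
theorem total_force_zero_count_acute (γ A C : ℝ)
    (hγ : γ ∈ Set.Ico (0 : ℝ) (Real.pi / 2)) (hA : 0 < A) (hC : 0 < C)
    (F : ℝ → ℝ)
    (hF : F = fun φ => -A * C ^ 2 - 2 * Real.sin (φ + γ)
      - 4 * C * Real.cos ((φ + γ) / 2) * Real.sin φ
      - (1 / 2) * C ^ 2 * Real.sin (2 * φ) + C ^ 2 * φ) :
    (0 ≤ -4 * C * Real.sin (γ / 2) + 2 * Real.cos γ →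
      Set.encard {φ ∈ Set.Icc (0 : ℝ) Real.pi | F φ = 0} ≤ 1) ∧
    (-4 * C * Real.sin (γ / 2) + 2 * Real.cos γ < 0 →
      Set.encard {φ ∈ Set.Icc (0 : ℝ) Real.pi | F φ = 0} ≤ 2) := by
  obtain rfl : F = totalForce γ A C := hF
  have hγπ : γ ≤ π := hγ.2.le.trans (half_le_self pi_pos.le)
  rw [← totalForceDeriv_pi]
  exact (total_force_zero_count_acute_general (Ico_subset_Icc_self hγ) hC.le
    (totalForce_zero_neg ⟨hγ.1, hγπ⟩ hA hC)).imp_right fun h _ => h
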